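/- Assume L/2 ≥ M ≥ r. Fix a subset S* ⊆ {1,…,M} and a ≥ 0. For a sequence X = (x_1,…,x_{L+1}) write X_{l−S*} = (x_{l−s})_{s∈S*}, and define: the reweighted stationary distribution μ̃_X on 𝒳 × 𝒳^{S*} by μ̃_X(z, F) = [ (Σ_{Z : Z_{−S*}=F} μ̄(z, Z)) · exp(a·1{F = X_{L+1−S*}}) ] / [ Σ_{z′, Z′} μ̄(z′, Z′) · exp(a·1{Z′_{−S*} = X_{L+1−S*}}) ]; the attention weights σ*_l = exp(a·1{X_{l−S*} = X_{L+1−S*}}) / Σ_{l′=M+1}^{L} exp(a·1{X_{l′−S*} = X_{L+1−S*}}) for M+1 ≤ l ≤ L; and the weighted empirical distribution ν̂_X(z, F) = Σ_{l=M+1}^{L} σ*_l · 1{x_l = z, X_{l−S*} = F}. Let ν_{S*} denote the marginal of μ̄ on the coordinates (x_{M+1}, (x_{M+1−s})_{s∈S*}) and assume m := min_{(e,F)} ν_{S*}(e, F) > 0. Then E_{X∼p}[ Σ_{z∈𝒳, F∈𝒳^{S*}} | μ̃_X(z,F) − ν̂_X(z,F) | ] ≤ 4·( (1−λ)^{−1}√(D₀+1)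 + 4M )^{1/2} / ( L^{1/2} · m ). -/

import Mathlib

open Finset

/-- Probability of the full sequence `x` (tokens indexed `0,…,T-1`, i.e. `x_1,…,x_T`)
under the `n`-gram Markov chain with parent offsets `r`, transition kernel `pk`,
and initial distribution `init` on the first `R` tokens. -/
noncomputable def ngramProb (d n R T : ℕ) (r : Fin n → ℕ)
    (pk : (Fin n → Fin d) → Fin d → ℝ) (init : (Fin R → Fin d) → ℝ)
    (hRT : R ≤ T) (x : Fin T → Fin d) : ℝ :=
  init (fun i => x ⟨i.1, lt_of_lt_of_le i.2 hRT⟩) *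
    ∏ l ∈ (Finset.Ico R T).attach,
      pk (fun k => x ⟨l.1 - r k, lt_of_le_of_lt (Nat.sub_le _ _) (Finset.mem_Ico.mp l.2).2⟩)
        (x ⟨l.1, (Finset.mem_Ico.mp l.2).2⟩)

/-- The window transition matrix `P_π` on `𝒳^R` of the `n`-gram chain:
`P(Z', Z) = π(z'_R | Z parents) · 1{Z' is the shift of Z}`. -/
noncomputable def windowMatrix (d n R : ℕ) (hR : 0 < R) (r : Fin n → ℕ)
    (hrpos : ∀ k, 0 < r k) (pk : (Fin n → Fin d) → Fin d → ℝ) :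
    Matrix (Fin R → Fin d) (Fin R → Fin d) ℝ :=
  Matrix.of fun Z' Z =>
    if ∀ j : Fin (R - 1),
        Z' ⟨j.1, lt_of_lt_of_le j.2 (Nat.sub_le R 1)⟩ = Z ⟨j.1 + 1, by have := j.2; omega⟩ then
      pk (fun k => Z ⟨R - r k, Nat.sub_lt hR (hrpos k)⟩) (Z' ⟨R - 1, Nat.sub_lt hR Nat.one_pos⟩)
    else 0

/-- The matrix `K - √μ (√μ)ᵀ` where `K = diag(√μ)⁻¹ P_π diag(√μ)`. -/
noncomputable def specA (d n R : ℕ) (hR : 0 < R) (r : Fin n → ℕ) (hrpos : ∀ k, 0 < r k)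
    (pk : (Fin n → Fin d) → Fin d → ℝ) (μ : (Fin R → Fin d) → ℝ) :
    Matrix (Fin R → Fin d) (Fin R → Fin d) ℝ :=
  (Matrix.diagonal fun Z => (Real.sqrt (μ Z))⁻¹) * windowMatrix d n R hR r hrpos pk *
      (Matrix.diagonal fun Z => Real.sqrt (μ Z)) -
    Matrix.vecMulVec (fun Z => Real.sqrt (μ Z)) (fun Z => Real.sqrt (μ Z))

/-- The tuple `(x_{l0-s})_{s ∈ S}` of tokens at offsets `S` before position `l0` (0-based). -/
def parents (d T : ℕ) (S : Finset ℕ) (x : Fin T → Fin d) (l0 : ℕ) (hl : l0 < T) :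
    {s // s ∈ S} → Fin d :=
  fun s => x ⟨l0 - s.1, lt_of_le_of_lt (Nat.sub_le _ _) hl⟩

/-- The window `Y_{l0} = (x_{l0}, (x_{l0-s})_{s ∈ S})` (0-based position `l0`). -/
def window (d T : ℕ) (S : Finset ℕ) (x : Fin T → Fin d) (l0 : ℕ) (hl : l0 < T) :
    Fin d × ({s // s ∈ S} → Fin d) :=
  (x ⟨l0, hl⟩, parents d T S x l0 hl)

/-- The law of the window `Y_{l0}` when the full sequence is distributed as `q`. -/
noncomputable def windowLaw (d T : ℕ) (S : Finset ℕ) (q : (Fin T → Fin d) → ℝ)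
    (l0 : ℕ) (hl : l0 < T) (w : Fin d × ({s // s ∈ S} → Fin d)) : ℝ :=
  ∑ x : Fin T → Fin d, if window d T S x l0 hl = w then q x else 0

/-- Total variation distance: half the ℓ₁ distance. -/
noncomputable def tvDist {α : Type*} [Fintype α] (p q : α → ℝ) : ℝ :=
  (∑ w, |p w - q w|) / 2

/-- χ²-divergence `D_{χ²}(p ‖ q) = Σ_ω (p ω - q ω)² / q ω`. -/
noncomputable def chiSq {α : Type*} [Fintype α] (p q : α → ℝ) : ℝ :=
  ∑ w, (p w - q w) ^ 2 / q w

theorem icoLtSucc {M L : ℕ} (l : {m // m ∈ Finset.Ico M L}) : l.1 < L + 1 :=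
  Nat.lt_succ_of_lt (Finset.mem_Ico.mp l.2).2

/-- The reweighted stationary distribution `μ̃_X` on `𝒳 × 𝒳^{S}`:
`μ̃(z, F) ∝ (Σ_{Z : Z_{-S}=F} μ̄(z,Z)) · exp(a·1{F = F₀})` with `F₀ = X_{L+1-S}`. -/
noncomputable def reweighted (d M : ℕ) (S : Finset ℕ) (a : ℝ)
    (mubar : (Fin (M + 1) → Fin d) → ℝ) (F0 : {s // s ∈ S} → Fin d)
    (w : Fin d × ({s // s ∈ S} → Fin d)) : ℝ :=
  windowLaw d (M + 1) S mubar M (Nat.lt_succ_self M) w *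
      Real.exp (a * (if w.2 = F0 then 1 else 0)) /
    ∑ y : Fin (M + 1) → Fin d,
      mubar y *
        Real.exp (a * (if parents d (M + 1) S y M (Nat.lt_succ_self M) = F0 then 1 else 0))

/-!
Read through its blocks of `R` consecutive tokens, the `n`-gram chain is an order-`R` Markov chain.
The spectral bound says that the conditional expectation of a mean-zero block observable contracts
by `lam` in `L²(μ)` at each step; hence, for the stationary chain, the centred indicator vectors of
two token windows that do not overlap decorrelate geometrically in their distance. Started from
`μ0` instead of `μ`, the same holds up to the factor `√(chiSq μ0 μ + 1)`, by Cauchy–Schwarz.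
Summing the covariances, the empirical law of the windows is within `O(1/L)` of the stationary
window law in mean square. Finally, when a probability vector `ν` is bounded below by `m`,
multiplying `ν` and another probability vector `ν'` by the same positive weights and renormalising
moves them at most `2 / m * ‖ν - ν'‖₂` apart in `ℓ¹`. This holds whatever the weights, so the
attention weights may depend on the path.
-/

open scoped Matrix

section Inequalities

theorem sum_range_natDist_le {N s : ℕ} {b : ℕ → ℝ} (hb : ∀ i, 0 ≤ b i) (hs : s < N) :
    ∑ s' ∈ range N, b (Nat.dist s s') ≤ 2 * ∑ i ∈ range N, b i := by
  have hbefore : ∑ s' ∈ range s, b (Nat.dist s s') ≤ ∑ i ∈ range N, b i :=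
    calc ∑ s' ∈ range s, b (Nat.dist s s')
        = ∑ s' ∈ range s, b (s - 1 - s' + 1) := by
          refine sum_congr rfl fun s' hs' => ?_
          have hlt : s' < s := mem_range.mp hs'
          rw [Nat.dist_eq_sub_of_le_right hlt.le]
          congr 1
          omega
      _ = ∑ i ∈ range s, b (i + 1) := sum_range_reflect (fun i => b (i + 1)) s
      _ ≤ ∑ i ∈ range (s + 1), b i := by
          rw [sum_range_succ']
          exact le_add_of_nonneg_right (hb 0)
      _ ≤ ∑ i ∈ range N, b i :=
          sum_le_sum_of_subset_of_nonneg (range_mono hs) fun i _ _ => hb i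
  have hafter : ∑ s' ∈ Ico s N, b (Nat.dist s s') ≤ ∑ i ∈ range N, b i := by
    rw [sum_Ico_eq_sum_range]
    refine le_trans (sum_le_sum fun i _ => ?_) (sum_le_sum_of_subset_of_nonneg
      (range_mono (Nat.sub_le N s)) fun i _ _ => hb i)
    rw [Nat.dist_eq_sub_of_le (Nat.le_add_right s i), Nat.add_sub_cancel_left]
  rw [← sum_range_add_sum_Ico _ hs.le]
  linarith

theorem sum_range_truncated_geometric_le {lam c C : ℝ} (hlam0 : 0 ≤ lam) (hlam1 : lam < 1)
    (hc : 0 ≤ c) (hC : 0 ≤ C) (N j : ℕ) :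
    ∑ i ∈ range N, (if i < j then c else C * lam ^ (i - j)) ≤ c * j + (1 - lam)⁻¹ * C := by
  calc ∑ i ∈ range N, (if i < j then c else C * lam ^ (i - j))
      ≤ ∑ i ∈ range (j + N), (if i < j then c else C * lam ^ (i - j)) :=
        sum_le_sum_of_subset_of_nonneg (range_mono (Nat.le_add_left N j)) fun i _ _ => by
          positivity
    _ = c * j + C * ∑ i ∈ range N, lam ^ i := by
        rw [sum_range_add, mul_sum]
        congr 1
        · rw [sum_congr rfl fun i hi => if_pos (mem_range.mp hi), sum_const, card_range,
            nsmul_eq_mul, mul_comm]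
        · simp
    _ ≤ c * j + (1 - lam)⁻¹ * C := by
        rw [mul_comm _ C, ← tsum_geometric_of_lt_one hlam0 hlam1]
        gcongr
        exact (summable_geometric_of_lt_one hlam0 hlam1).sum_le_tsum _ fun i _ =>
          pow_nonneg hlam0 i

theorem dotProduct_le_sqrt_chiSq_mul_sqrt {α : Type*} [Fintype α] {p q : α → ℝ}
    (hq : ∀ a, 0 < q a) (hp1 : ∑ a, p a = 1) (hq1 : ∑ a, q a = 1) (h : α → ℝ) :
    p ⬝ᵥ h ≤ √(chiSq p q + 1) * √(∑ a, q a * h a ^ 2) := by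
  have hchi : chiSq p q + 1 = ∑ a, (p a / √(q a)) ^ 2 := by
    have hterm (a : α) : (p a - q a) ^ 2 / q a = (p a / √(q a)) ^ 2 - 2 * p a + q a := by
      rw [div_pow, Real.sq_sqrt (hq a).le]
      field [(hq a).ne']
    simp only [chiSq, hterm, sum_add_distrib, sum_sub_distrib, ← mul_sum, hp1, hq1]
    ring
  calc p ⬝ᵥ h = ∑ a, p a / √(q a) * (√(q a) * h a) :=
        sum_congr rfl fun a _ => by field [(Real.sqrt_pos.mpr (hq a)).ne']
    _ ≤ √(∑ a, (p a / √(q a)) ^ 2) * √(∑ a, (√(q a) * h a) ^ 2) :=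
        Real.sum_mul_le_sqrt_mul_sqrt _ _ _
    _ = √(chiSq p q + 1) * √(∑ a, q a * h a ^ 2) := by
        simp only [hchi, mul_pow, Real.sq_sqrt (hq _).le]

theorem sq_map_le_map_sq {α : Type*} {E : (α → ℝ) →ₗ[ℝ] ℝ} (hE : ∀ g, 0 ≤ g → 0 ≤ E g)
    (hE1 : E 1 = 1) (g : α → ℝ) : E g ^ 2 ≤ E (g ^ 2) := by
  have hvar : 0 ≤ E ((g - E g • 1) ^ 2) := hE _ fun x => sq_nonneg _
  have hexpand : (g - E g • (1 : α → ℝ)) ^ 2 = g ^ 2 - (2 * E g) • g + E g ^ 2 • 1 := by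
    ext x
    simp only [Pi.pow_apply, Pi.sub_apply, Pi.smul_apply, Pi.one_apply, Pi.add_apply, smul_eq_mul]
    ring
  rw [hexpand, map_add, map_sub, map_smul, map_smul, hE1] at hvar
  simp only [smul_eq_mul] at hvar
  linarith

theorem dotProduct_self_le_one {α : Type*} [Fintype α] {ν : α → ℝ} (hν : ν ∈ stdSimplex ℝ α) :
    ν ⬝ᵥ ν ≤ 1 := by
  refine (sum_le_sum fun w _ => ?_).trans_eq hν.2
  exact mul_le_of_le_one_right (hν.1 w)
    ((single_le_sum (fun w _ => hν.1 w) (mem_univ w)).trans_eq hν.2)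

end Inequalities

section Tilting

variable {W : Type*} [Fintype W]

/-- The weights `ν` tilted by the factor `e` and normalised to total mass one. -/
noncomputable def tilt (ν e : W → ℝ) (w : W) : ℝ := ν w * e w / (ν ⬝ᵥ e)

theorem sum_abs_tilt_sub_tilt_le {ν ν' e : W → ℝ} (hν' : 0 ≤ ν') (he : 0 ≤ e)
    (hνe : 0 < ν ⬝ᵥ e) (hν'e : 0 < ν' ⬝ᵥ e) :
    ∑ w, |tilt ν e w - tilt ν' e w| ≤ 2 * (∑ w, |ν w - ν' w| * e w) / (ν ⬝ᵥ e) := by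
  have hmass : |ν' ⬝ᵥ e - ν ⬝ᵥ e| ≤ ∑ w, |ν w - ν' w| * e w := by
    rw [abs_sub_comm, ← sub_dotProduct]
    refine (abs_sum_le_sum_abs _ _).trans_eq (sum_congr rfl fun w _ => ?_)
    rw [abs_mul, abs_of_nonneg (he w), Pi.sub_apply]
  have hterm (w : W) : |tilt ν e w - tilt ν' e w| ≤
      |ν w - ν' w| * e w / (ν ⬝ᵥ e) +
        ν' w * e w * (|ν' ⬝ᵥ e - ν ⬝ᵥ e| / (ν ⬝ᵥ e * (ν' ⬝ᵥ e))) := by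
    have hsplit : tilt ν e w - tilt ν' e w = (ν w - ν' w) * e w / (ν ⬝ᵥ e) +
        ν' w * e w * ((ν' ⬝ᵥ e - ν ⬝ᵥ e) / (ν ⬝ᵥ e * (ν' ⬝ᵥ e))) := by
      unfold tilt
      field_simp
      ring
    rw [hsplit]
    refine (abs_add_le _ _).trans_eq ?_
    rw [abs_div, abs_mul, abs_mul, abs_div, abs_of_nonneg (he w), abs_of_pos hνe,
      abs_of_nonneg (mul_nonneg (hν' w) (he w)), abs_of_pos (mul_pos hνe hν'e)]
  calc ∑ w, |tilt ν e w - tilt ν' e w|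
      ≤ (∑ w, |ν w - ν' w| * e w) / (ν ⬝ᵥ e) +
          (ν' ⬝ᵥ e) * (|ν' ⬝ᵥ e - ν ⬝ᵥ e| / (ν ⬝ᵥ e * (ν' ⬝ᵥ e))) := by
        refine (sum_le_sum fun w _ => hterm w).trans_eq ?_
        rw [sum_add_distrib, ← sum_div, ← sum_mul]
        rfl
    _ = (∑ w, |ν w - ν' w| * e w + |ν' ⬝ᵥ e - ν ⬝ᵥ e|) / (ν ⬝ᵥ e) := by
        field_simp
    _ ≤ 2 * (∑ w, |ν w - ν' w| * e w) / (ν ⬝ᵥ e) := by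
        rw [two_mul]
        gcongr

theorem sum_abs_tilt_sub_tilt_le_sqrt {ν ν' e : W → ℝ} {m : ℝ} (hm : 0 < m)
    (hν : ∀ w, m ≤ ν w) (hν' : ν' ∈ stdSimplex ℝ W) (he : ∀ w, 0 < e w) :
    ∑ w, |tilt ν e w - tilt ν' e w| ≤ 2 / m * √(∑ w, (ν' w - ν w) ^ 2) := by
  obtain ⟨w₀, hw₀⟩ : ∃ w, 0 < ν' w := by
    by_contra! h
    linarith [hν'.2, sum_nonpos fun w (_ : w ∈ univ) => h w]
  have hν'e : 0 < ν' ⬝ᵥ e :=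
    sum_pos' (fun w _ => mul_nonneg (hν'.1 w) (he w).le) ⟨w₀, mem_univ _, mul_pos hw₀ (he w₀)⟩
  have hmass : m * ∑ w, e w ≤ ν ⬝ᵥ e := by
    rw [mul_sum]
    exact sum_le_sum fun w _ => mul_le_mul_of_nonneg_right (hν w) (he w).le
  have hνe : 0 < ν ⬝ᵥ e :=
    (mul_pos hm (sum_pos (fun w _ => he w) ⟨w₀, mem_univ _⟩)).trans_le hmass
  have hpoint (w : W) : |ν w - ν' w| ≤ √(∑ w, (ν' w - ν w) ^ 2) := by
    rw [abs_sub_comm]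
    exact Real.abs_le_sqrt
      (single_le_sum (f := fun w => (ν' w - ν w) ^ 2) (fun _ _ => sq_nonneg _) (mem_univ w))
  calc ∑ w, |tilt ν e w - tilt ν' e w|
      ≤ 2 * (∑ w, |ν w - ν' w| * e w) / (ν ⬝ᵥ e) :=
        sum_abs_tilt_sub_tilt_le hν'.1 (fun w => (he w).le) hνe hν'e
    _ ≤ 2 * (√(∑ w, (ν' w - ν w) ^ 2) * ((ν ⬝ᵥ e) / m)) / (ν ⬝ᵥ e) := by
        gcongr
        calc ∑ w, |ν w - ν' w| * e w
            ≤ √(∑ w, (ν' w - ν w) ^ 2) * ∑ w, e w := by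
              rw [mul_sum]
              exact sum_le_sum fun w _ => mul_le_mul_of_nonneg_right (hpoint w) (he w).le
          _ ≤ √(∑ w, (ν' w - ν w) ^ 2) * ((ν ⬝ᵥ e) / m) := by
              gcongr
              rwa [le_div_iff₀' hm]
    _ = 2 / m * √(∑ w, (ν' w - ν w) ^ 2) := by
        field_simp

end Tilting

section Empirical

variable {ι W : Type*} [DecidableEq W]

/-- The empirical distribution of the observations `ξ i`, `i ∈ s`. -/
noncomputable def empirical (s : Finset ι) (ξ : ι → W) : W → ℝ :=
  (#s : ℝ)⁻¹ • ∑ i ∈ s, Pi.single (ξ i) 1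

theorem empirical_apply (s : Finset ι) (ξ : ι → W) (w : W) :
    empirical s ξ w = (#s : ℝ)⁻¹ * ∑ i ∈ s, if ξ i = w then 1 else 0 := by
  simp [empirical, Pi.single_apply, eq_comm]

/-- The indicator vector of `w`, recentred at the weights `ν`. -/
def centered (ν : W → ℝ) (w : W) : W → ℝ := Pi.single w 1 - ν

theorem empirical_sub {s : Finset ι} (hs : s.Nonempty) (ξ : ι → W) (ν : W → ℝ) :
    empirical s ξ - ν = (#s : ℝ)⁻¹ • ∑ i ∈ s, centered ν (ξ i) := by
  have hcard : (#s : ℝ) ≠ 0 := by exact_mod_cast hs.card_ne_zero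
  simp only [centered, sum_sub_distrib, sum_const, smul_sub, ← Nat.cast_smul_eq_nsmul ℝ,
    smul_smul, inv_mul_cancel₀ hcard, one_smul, empirical]

variable [Fintype W]

theorem empirical_mem_stdSimplex {s : Finset ι} (hs : s.Nonempty) (ξ : ι → W) :
    empirical s ξ ∈ stdSimplex ℝ W := by
  have hcard : (#s : ℝ) ≠ 0 := by exact_mod_cast hs.card_ne_zero
  simp only [stdSimplex, Set.mem_ofPred_eq, empirical_apply]
  refine ⟨fun w => mul_nonneg (by positivity) (sum_nonneg fun i _ => by positivity), ?_⟩
  rw [← mul_sum, sum_comm]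
  simp [hcard]

theorem empirical_dotProduct (s : Finset ι) (ξ : ι → W) (e : W → ℝ) :
    empirical s ξ ⬝ᵥ e = (#s : ℝ)⁻¹ * ∑ i ∈ s, e (ξ i) := by
  simp [empirical, smul_dotProduct, sum_dotProduct]

theorem tilt_empirical {s : Finset ι} (hs : s.Nonempty) (ξ : ι → W) (e : W → ℝ) (w : W) :
    tilt (empirical s ξ) e w =
      ∑ i ∈ s, e (ξ i) / (∑ i' ∈ s, e (ξ i')) * if ξ i = w then 1 else 0 := by
  have hcard : (#s : ℝ)⁻¹ ≠ 0 := inv_ne_zero (by exact_mod_cast hs.card_ne_zero)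
  rw [tilt, empirical_dotProduct, empirical_apply, mul_assoc, mul_div_mul_left _ _ hcard,
    sum_mul, sum_div]
  refine sum_congr rfl fun i _ => ?_
  split_ifs with h <;> simp [h]

theorem centered_dotProduct_centered (ν : W → ℝ) (a b : W) :
    centered ν a ⬝ᵥ centered ν b = (if a = b then 1 else 0) - ν a - ν b + ν ⬝ᵥ ν := by
  simp only [centered, sub_dotProduct, dotProduct_sub, single_one_dotProduct,
    dotProduct_single_one, Pi.sub_apply, Pi.single_apply, eq_comm (a := b)]
  ring

theorem centered_dotProduct_self_le {ν : W → ℝ} (hν : 0 ≤ ν) (a : W) :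
    centered ν a ⬝ᵥ centered ν a ≤ 1 + ν ⬝ᵥ ν := by
  have ha : 0 ≤ ν a := hν a
  rw [centered_dotProduct_centered, if_pos rfl]
  linarith

theorem centered_dotProduct_centered_le_two {ν : W → ℝ} (hν : ν ∈ stdSimplex ℝ W) (a b : W) :
    centered ν a ⬝ᵥ centered ν b ≤ 2 := by
  have ha : 0 ≤ ν a := hν.1 a
  have hb : 0 ≤ ν b := hν.1 b
  have hself := dotProduct_self_le_one hν
  rw [centered_dotProduct_centered]
  split_ifs <;> linarith

theorem sum_sq_empirical_sub {s : Finset ι} (hs : s.Nonempty) (ξ : ι → W) (ν : W → ℝ) :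
    ∑ w, (empirical s ξ w - ν w) ^ 2 =
      ((#s : ℝ)⁻¹) ^ 2 * ∑ i ∈ s, ∑ i' ∈ s, centered ν (ξ i) ⬝ᵥ centered ν (ξ i') := by
  calc ∑ w, (empirical s ξ w - ν w) ^ 2
      = (empirical s ξ - ν) ⬝ᵥ (empirical s ξ - ν) := by
        simp only [dotProduct, Pi.sub_apply, sq]
    _ = _ := by
        rw [empirical_sub hs, smul_dotProduct, dotProduct_smul, sum_dotProduct]
        simp only [dotProduct_sum, smul_eq_mul]
        ring

end Empirical

section MeanZeroContraction

variable {α : Type*} [Fintype α]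

/-- `P` contracts mean-zero observables by the factor `lam`: for `φ` of `μ`-mean zero, the
`L²(μ)` norm of `φ ᵥ* P` is at most `lam` times that of `φ`. The matrix `P` is column-stochastic
in the applications, so that `φ ᵥ* P` is the conditional expectation of `φ` one step ahead. -/
def ContractsMeanZero (P : Matrix α α ℝ) (μ : α → ℝ) (lam : ℝ) : Prop :=
  ∀ φ : α → ℝ, φ ⬝ᵥ μ = 0 → ∑ a, μ a * (φ ᵥ* P) a ^ 2 ≤ lam ^ 2 * ∑ a, μ a * φ a ^ 2

open scoped Matrix.Norms.L2Operator in
theorem sum_sq_vecMul_le {A : Matrix α α ℝ} {lam : ℝ} (hlam : 0 ≤ lam)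
    (hA : ∀ v, √(∑ a, (A *ᵥ v) a ^ 2) ≤ lam * √(∑ a, v a ^ 2)) (u : α → ℝ) :
    ∑ a, (u ᵥ* A) a ^ 2 ≤ lam ^ 2 * ∑ a, u a ^ 2 := by
  classical
  have hnorm : ‖Aᵀ‖ ≤ lam := by
    rw [← Matrix.conjTranspose_eq_transpose_of_trivial, Matrix.l2_opNorm_conjTranspose,
      Matrix.cstar_norm_def]
    refine ContinuousLinearMap.opNorm_le_bound _ hlam fun v => ?_
    simpa [EuclideanSpace.norm_eq] using hA v.ofLp
  have hbound := (Matrix.l2_opNorm_mulVec Aᵀ (WithLp.toLp 2 u)).trans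
    (mul_le_mul_of_nonneg_right hnorm (norm_nonneg _))
  have hsq := pow_le_pow_left₀ (norm_nonneg _) hbound 2
  rw [mul_pow, EuclideanSpace.norm_sq_eq, EuclideanSpace.norm_sq_eq] at hsq
  simpa [Matrix.mulVec_transpose] using hsq

variable [DecidableEq α]

theorem contractsMeanZero_of_opNorm_le {P : Matrix α α ℝ} {μ : α → ℝ} {lam : ℝ}
    (hμ : ∀ a, 0 < μ a) (hlam : 0 ≤ lam)
    (hop : ∀ v, √(∑ a, ((Matrix.diagonal (fun a => (√(μ a))⁻¹) * P *
        Matrix.diagonal (fun a => √(μ a)) -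
          Matrix.vecMulVec (fun a => √(μ a)) (fun a => √(μ a))) *ᵥ v) a ^ 2) ≤
      lam * √(∑ a, v a ^ 2)) :
    ContractsMeanZero P μ lam := by
  intro φ hφ
  set u : α → ℝ := fun a => √(μ a) * φ a
  have hmean : u ⬝ᵥ (fun a => √(μ a)) = 0 := by
    rw [← hφ]
    refine sum_congr rfl fun a _ => ?_
    rw [mul_right_comm, Real.mul_self_sqrt (hμ a).le, mul_comm]
  have hu : u ᵥ* Matrix.diagonal (fun a => (√(μ a))⁻¹) = φ := by
    ext a
    rw [Matrix.vecMul_diagonal, mul_comm, inv_mul_cancel_left₀ (Real.sqrt_pos.mpr (hμ a)).ne']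
  have h := sum_sq_vecMul_le hlam hop u
  rw [Matrix.vecMul_sub, Matrix.vecMul_vecMulVec, hmean, zero_smul, sub_zero,
    ← Matrix.vecMul_vecMul, ← Matrix.vecMul_vecMul, hu] at h
  simpa only [Matrix.vecMul_diagonal, u, mul_pow, Real.sq_sqrt (hμ _).le, mul_comm (_ ^ 2) (μ _)]
    using h

theorem vecMul_pow_dotProduct {P : Matrix α α ℝ} {μ : α → ℝ} (hP : P *ᵥ μ = μ) (φ : α → ℝ)
    (k : ℕ) : (φ ᵥ* P ^ k) ⬝ᵥ μ = φ ⬝ᵥ μ := by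
  induction k with
  | zero => simp
  | succ k ih =>
    rw [pow_succ, ← Matrix.vecMul_vecMul, ← Matrix.dotProduct_mulVec, hP, ih]

theorem ContractsMeanZero.pow {P : Matrix α α ℝ} {μ : α → ℝ} {lam : ℝ}
    (hC : ContractsMeanZero P μ lam) (hP : P *ᵥ μ = μ) (k : ℕ) :
    ContractsMeanZero (P ^ k) μ (lam ^ k) := by
  induction k with
  | zero => intro φ _; simp
  | succ k ih =>
    intro φ hφ
    rw [pow_succ, ← Matrix.vecMul_vecMul]
    calc ∑ a, μ a * ((φ ᵥ* P ^ k) ᵥ* P) a ^ 2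
        ≤ lam ^ 2 * ∑ a, μ a * (φ ᵥ* P ^ k) a ^ 2 :=
          hC _ ((vecMul_pow_dotProduct hP φ k).trans hφ)
      _ ≤ lam ^ 2 * ((lam ^ k) ^ 2 * ∑ a, μ a * φ a ^ 2) :=
          mul_le_mul_of_nonneg_left (ih φ hφ) (sq_nonneg lam)
      _ = (lam ^ (k + 1)) ^ 2 * ∑ a, μ a * φ a ^ 2 := by ring

end MeanZeroContraction

section Words

variable {𝒳 : Type*} {R : ℕ}

/-- The sequence `x` read from position `t` on. -/
def shift (t : ℕ) (x : ℕ → 𝒳) : ℕ → 𝒳 := fun i => x (t + i)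

/-- The state of an order-`R` chain at time `t`: the `R` consecutive tokens of `x` from position
`t` on. -/
def block (R t : ℕ) (x : ℕ → 𝒳) : Fin R → 𝒳 := fun i => x (t + i)

/-- The block following `Z` when the next token is `e`. -/
def push (Z : Fin R → 𝒳) (e : 𝒳) : Fin R → 𝒳 :=
  fun i => if h : i.1 + 1 < R then Z ⟨i.1 + 1, h⟩ else e

theorem block_succ_update (t : ℕ) (x : ℕ → 𝒳) (e : 𝒳) :
    block R (t + 1) (Function.update x (t + R) e) = push (block R t x) e := by
  ext i
  have hi := i.2
  simp only [block, push]
  split_ifs with h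
  · rw [Function.update_of_ne (by omega), add_assoc, add_comm 1]
  · rw [show t + 1 + i.1 = t + R by omega, Function.update_self]

theorem shift_update (s t : ℕ) (x : ℕ → 𝒳) (e : 𝒳) :
    shift s (Function.update x (s + t) e) = Function.update (shift s x) t e := by
  ext i
  simp [shift, Function.update_apply]

theorem block_shift (s t : ℕ) (x : ℕ → 𝒳) : block R t (shift s x) = block R (s + t) x := by
  ext i
  simp only [block, shift, add_assoc]

theorem dependsOn_comp_block {β : Type*} (t : ℕ) (φ : (Fin R → 𝒳) → β) :
    DependsOn (φ ∘ block R t) (Set.Iio (t + R)) := by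
  intro x y hxy
  exact congrArg φ (funext fun i => hxy _ (Nat.add_lt_add_left i.2 t))

theorem dependsOn_comp_shift {β : Type*} {T : ℕ} {g : (ℕ → 𝒳) → β} (hg : DependsOn g (Set.Iio T))
    (t : ℕ) : DependsOn (g ∘ shift t) (Set.Iio (t + T)) :=
  fun _ _ hxy => hg fun _ hi => hxy _ (Nat.add_lt_add_left hi t)

theorem dependsOn_mul {g h : (ℕ → 𝒳) → ℝ} {s : Set ℕ} (hg : DependsOn g s) (hh : DependsOn h s) :
    DependsOn (g * h) s :=
  fun _ _ hxy => congrArg₂ (· * ·) (hg hxy) (hh hxy)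

variable [Inhabited 𝒳]

/-- The finite word `Z` continued by the default token. -/
noncomputable def extendWord {T : ℕ} (Z : Fin T → 𝒳) : ℕ → 𝒳 :=
  Function.extend Fin.val Z fun _ => default

theorem extendWord_val {T : ℕ} (Z : Fin T → 𝒳) (i : Fin T) : extendWord Z i = Z i :=
  Fin.val_injective.extend_apply _ _ i

theorem block_zero_extendWord (Z : Fin R → 𝒳) : block R 0 (extendWord Z) = Z := by
  ext i
  rw [block, zero_add, extendWord_val]

theorem extendWord_snoc {T : ℕ} (Z : Fin T → 𝒳) (e : 𝒳) :
    extendWord (Fin.snoc Z e : Fin (T + 1) → 𝒳) = Function.update (extendWord Z) T e := by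
  ext i
  rcases lt_trichotomy i T with hi | rfl | hi
  · rw [Function.update_of_ne hi.ne]
    exact (extendWord_val _ (Fin.castSucc ⟨i, hi⟩)).trans
      ((Fin.snoc_castSucc _ _ _).trans (extendWord_val Z ⟨i, hi⟩).symm)
  · rw [Function.update_self]
    exact (extendWord_val _ (Fin.last i)).trans (Fin.snoc_last _ _)
  · have hout {T' : ℕ} (hT' : T' ≤ i) (Y : Fin T' → 𝒳) : extendWord Y i = default :=
      Function.extend_apply' _ _ _ fun ⟨j, hj⟩ => absurd (hj ▸ j.2) hT'.not_gt
    rw [Function.update_of_ne hi.ne', hout hi, hout hi.le]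

theorem extendWord_block_eq {T t i : ℕ} (x : ℕ → 𝒳) (hi : i < T) :
    extendWord (block T t x) i = x (t + i) :=
  extendWord_val (block T t x) ⟨i, hi⟩

end Words

section ConditionalExpectation

variable {𝒳 : Type*} [Fintype 𝒳] {R : ℕ} {κ : (Fin R → 𝒳) → 𝒳 → ℝ}

/-- For the order-`R` chain with transition kernel `κ`, the operator averaging over the token at
position `t + R` given the block at position `t`. Observables are functions of infinite sequences,
so that one operator serves every horizon. -/
def stepExpect (κ : (Fin R → 𝒳) → 𝒳 → ℝ) (t : ℕ) : Module.End ℝ ((ℕ → 𝒳) → ℝ) where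
  toFun g x := ∑ e, κ (block R t x) e * g (Function.update x (t + R) e)
  map_add' g h := by ext x; simp only [Pi.add_apply, mul_add, sum_add_distrib]
  map_smul' c g := by
    ext x
    simp only [Pi.smul_apply, smul_eq_mul, RingHom.id_apply, mul_sum, mul_left_comm c]

theorem stepExpect_apply (t : ℕ) (g : (ℕ → 𝒳) → ℝ) (x : ℕ → 𝒳) :
    stepExpect κ t g x = ∑ e, κ (block R t x) e * g (Function.update x (t + R) e) := rfl

/-- The conditional expectation given the tokens before position `t + R`, averaging over the `k`
tokens from there on. -/
def condExpect (κ : (Fin R → 𝒳) → 𝒳 → ℝ) : ℕ → ℕ → Module.End ℝ ((ℕ → 𝒳) → ℝ)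
  | _, 0 => 1
  | t, k + 1 => stepExpect κ t * condExpect κ (t + 1) k

theorem condExpect_zero (t : ℕ) (g : (ℕ → 𝒳) → ℝ) : condExpect κ t 0 g = g := rfl

theorem condExpect_succ (t k : ℕ) (g : (ℕ → 𝒳) → ℝ) :
    condExpect κ t (k + 1) g = stepExpect κ t (condExpect κ (t + 1) k g) := rfl

theorem condExpect_add (t j k : ℕ) (g : (ℕ → 𝒳) → ℝ) :
    condExpect κ t (j + k) g = condExpect κ t j (condExpect κ (t + j) k g) := by
  induction j generalizing t with
  | zero => rw [Nat.zero_add, Nat.add_zero, condExpect_zero]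
  | succ j ih =>
    rw [add_right_comm, condExpect_succ, ih, condExpect_succ, add_right_comm, add_assoc t j]

theorem stepExpect_mul {t : ℕ} {h : (ℕ → 𝒳) → ℝ} (hh : DependsOn h (Set.Iio (t + R)))
    (g : (ℕ → 𝒳) → ℝ) : stepExpect κ t (h * g) = h * stepExpect κ t g := by
  ext x
  simp only [stepExpect_apply, Pi.mul_apply, mul_sum]
  refine sum_congr rfl fun e _ => ?_
  rw [hh (y := x) fun i hi => Function.update_of_ne (ne_of_lt hi) _ _]
  ring

theorem condExpect_mul {t : ℕ} {h : (ℕ → 𝒳) → ℝ} (hh : DependsOn h (Set.Iio (t + R))) (k : ℕ)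
    (g : (ℕ → 𝒳) → ℝ) : condExpect κ t k (h * g) = h * condExpect κ t k g := by
  induction k generalizing t with
  | zero => rfl
  | succ k ih =>
    rw [condExpect_succ, ih (hh.mono (Set.Iio_subset_Iio (by omega))), stepExpect_mul hh,
      condExpect_succ]

theorem dependsOn_stepExpect {t : ℕ} {g : (ℕ → 𝒳) → ℝ}
    (hg : DependsOn g (Set.Iio (t + 1 + R))) :
    DependsOn (stepExpect κ t g) (Set.Iio (t + R)) := by
  intro x y hxy
  have hblock : block R t x = block R t y :=
    funext fun i => hxy _ (Nat.add_lt_add_left i.2 t)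
  simp only [stepExpect_apply, hblock]
  refine sum_congr rfl fun e _ => congrArg _ (hg fun i hi => ?_)
  rcases eq_or_ne i (t + R) with rfl | hne
  · simp only [Function.update_self]
  · simp only [Function.update_of_ne hne]
    exact hxy i (by simp only [Set.mem_Iio] at hi ⊢; omega)

theorem dependsOn_condExpect {t k : ℕ} {g : (ℕ → 𝒳) → ℝ}
    (hg : DependsOn g (Set.Iio (t + k + R))) :
    DependsOn (condExpect κ t k g) (Set.Iio (t + R)) := by
  induction k generalizing t with
  | zero => exact hg
  | succ k ih => exact dependsOn_stepExpect (ih (by rwa [add_assoc t 1, add_comm 1 k]))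

theorem condExpect_comp_shift (s t k : ℕ) (g : (ℕ → 𝒳) → ℝ) :
    condExpect κ (s + t) k (g ∘ shift s) = condExpect κ t k g ∘ shift s := by
  induction k generalizing t with
  | zero => rfl
  | succ k ih =>
    ext x
    simp only [condExpect_succ, add_assoc s t 1, ih, stepExpect_apply, Function.comp_apply,
      block_shift, ← shift_update, add_assoc s t R]

theorem condExpect_nonneg (hκ : ∀ Z, κ Z ∈ stdSimplex ℝ 𝒳) (t k : ℕ) {g : (ℕ → 𝒳) → ℝ}
    (hg : 0 ≤ g) : 0 ≤ condExpect κ t k g := by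
  induction k generalizing t with
  | zero => exact hg
  | succ k ih => exact fun x => sum_nonneg fun e _ => mul_nonneg ((hκ _).1 e) (ih _ _)

theorem condExpect_one (hκ : ∀ Z, κ Z ∈ stdSimplex ℝ 𝒳) (t k : ℕ) : condExpect κ t k 1 = 1 := by
  induction k generalizing t with
  | zero => rfl
  | succ k ih =>
    ext x
    simp only [condExpect_succ, ih, stepExpect_apply, Pi.one_apply, mul_one, (hκ _).2]

theorem condExpect_of_dependsOn (hκ : ∀ Z, κ Z ∈ stdSimplex ℝ 𝒳) {t k K : ℕ} (hkK : k ≤ K)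
    {g : (ℕ → 𝒳) → ℝ} (hg : DependsOn g (Set.Iio (t + k + R))) :
    condExpect κ t K g = condExpect κ t k g := by
  obtain ⟨i, rfl⟩ := Nat.exists_eq_add_of_le hkK
  have hinner := condExpect_mul (κ := κ) hg i 1
  rw [mul_one, condExpect_one hκ, mul_one] at hinner
  rw [condExpect_add, hinner]

end ConditionalExpectation

section BlockMatrix

variable {𝒳 : Type*} [Fintype 𝒳] [DecidableEq 𝒳] {R : ℕ} {κ : (Fin R → 𝒳) → 𝒳 → ℝ}

/-- The transition matrix of the blocks of an order-`R` chain; columns are indexed by the current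
block, so each column sums to one. -/
def blockMatrix (κ : (Fin R → 𝒳) → 𝒳 → ℝ) : Matrix (Fin R → 𝒳) (Fin R → 𝒳) ℝ :=
  Matrix.of fun Z' Z => ∑ e, if Z' = push Z e then κ Z e else 0

theorem vecMul_blockMatrix (φ : (Fin R → 𝒳) → ℝ) (Z : Fin R → 𝒳) :
    (φ ᵥ* blockMatrix κ) Z = ∑ e, κ Z e * φ (push Z e) := by
  simp only [Matrix.vecMul, dotProduct, blockMatrix, Matrix.of_apply, mul_sum]
  rw [sum_comm]
  simp [mul_comm]

theorem condExpect_comp_block (t k : ℕ) (φ : (Fin R → 𝒳) → ℝ) :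
    condExpect κ t k (φ ∘ block R (t + k)) = (φ ᵥ* blockMatrix κ ^ k) ∘ block R t := by
  induction k generalizing t with
  | zero => rw [condExpect_zero, pow_zero, Matrix.vecMul_one, add_zero]
  | succ k ih =>
    ext x
    rw [condExpect_succ, ← add_assoc, add_right_comm, ih, pow_succ, ← Matrix.vecMul_vecMul,
      stepExpect_apply, Function.comp_apply, vecMul_blockMatrix]
    simp only [Function.comp_apply, block_succ_update]

end BlockMatrix

section PathExpectation

variable {𝒳 : Type*} [Fintype 𝒳] [Inhabited 𝒳] {R : ℕ} {κ : (Fin R → 𝒳) → 𝒳 → ℝ}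

/-- The expectation of an observable of the chain started from a given block, run for `k` steps. -/
noncomputable def blockExpect (κ : (Fin R → 𝒳) → 𝒳 → ℝ) (k : ℕ) :
    ((ℕ → 𝒳) → ℝ) →ₗ[ℝ] (Fin R → 𝒳) → ℝ :=
  LinearMap.funLeft ℝ ℝ extendWord ∘ₗ condExpect κ 0 k

theorem blockExpect_apply (k : ℕ) (g : (ℕ → 𝒳) → ℝ) (Z : Fin R → 𝒳) :
    blockExpect κ k g Z = condExpect κ 0 k g (extendWord Z) := rfl

theorem blockExpect_nonneg (hκ : ∀ Z, κ Z ∈ stdSimplex ℝ 𝒳) (k : ℕ) {g : (ℕ → 𝒳) → ℝ}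
    (hg : 0 ≤ g) : 0 ≤ blockExpect κ k g :=
  fun _ => condExpect_nonneg hκ 0 k hg _

theorem blockExpect_one (hκ : ∀ Z, κ Z ∈ stdSimplex ℝ 𝒳) (k : ℕ) : blockExpect κ k 1 = 1 :=
  funext fun _ => congrFun (condExpect_one hκ 0 k) _

theorem sq_blockExpect_le (hκ : ∀ Z, κ Z ∈ stdSimplex ℝ 𝒳) (k : ℕ) (g : (ℕ → 𝒳) → ℝ)
    (Z : Fin R → 𝒳) : blockExpect κ k g Z ^ 2 ≤ blockExpect κ k (g ^ 2) Z :=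
  sq_map_le_map_sq (E := LinearMap.proj Z ∘ₗ blockExpect κ k)
    (fun _ hg => blockExpect_nonneg hκ k hg Z) (congrFun (blockExpect_one hκ k) Z) g

theorem condExpect_comp_shift_eq_blockExpect (t : ℕ) {j : ℕ} {g : (ℕ → 𝒳) → ℝ}
    (hg : DependsOn g (Set.Iio (j + R))) :
    condExpect κ t j (g ∘ shift t) = blockExpect κ j g ∘ block R t := by
  have hshift := condExpect_comp_shift (κ := κ) t 0 j g
  ext x
  rw [add_zero] at hshift
  rw [hshift, Function.comp_apply, Function.comp_apply, blockExpect_apply]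
  refine dependsOn_condExpect (by rwa [zero_add]) fun i hi => ?_
  exact (extendWord_block_eq x (by simpa using hi)).symm

/-- The expectation of an observable of the chain whose initial block has law `init`, run for `K`
steps. -/
noncomputable def pathExpect (κ : (Fin R → 𝒳) → 𝒳 → ℝ) (init : (Fin R → 𝒳) → ℝ) (K : ℕ) :
    ((ℕ → 𝒳) → ℝ) →ₗ[ℝ] ℝ where
  toFun g := init ⬝ᵥ blockExpect κ K g
  map_add' g h := by rw [map_add, dotProduct_add]
  map_smul' c g := by rw [map_smul, dotProduct_smul, RingHom.id_apply]

theorem pathExpect_apply (init : (Fin R → 𝒳) → ℝ) (K : ℕ) (g : (ℕ → 𝒳) → ℝ) :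
    pathExpect κ init K g = init ⬝ᵥ blockExpect κ K g := rfl

theorem pathExpect_nonneg (hκ : ∀ Z, κ Z ∈ stdSimplex ℝ 𝒳) {init : (Fin R → 𝒳) → ℝ}
    (hinit : 0 ≤ init) (K : ℕ) {g : (ℕ → 𝒳) → ℝ} (hg : 0 ≤ g) : 0 ≤ pathExpect κ init K g :=
  dotProduct_nonneg_of_nonneg hinit (blockExpect_nonneg hκ K hg)

theorem pathExpect_mono (hκ : ∀ Z, κ Z ∈ stdSimplex ℝ 𝒳) {init : (Fin R → 𝒳) → ℝ}
    (hinit : 0 ≤ init) (K : ℕ) : Monotone (pathExpect κ init K) := by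
  intro g h hgh
  have := pathExpect_nonneg hκ hinit K (sub_nonneg.mpr hgh)
  rwa [map_sub, sub_nonneg] at this

theorem pathExpect_one (hκ : ∀ Z, κ Z ∈ stdSimplex ℝ 𝒳) {init : (Fin R → 𝒳) → ℝ}
    (hinit : ∑ Z, init Z = 1) (K : ℕ) : pathExpect κ init K 1 = 1 := by
  rw [pathExpect_apply, blockExpect_one hκ, dotProduct_one, hinit]

theorem pathExpect_const (hκ : ∀ Z, κ Z ∈ stdSimplex ℝ 𝒳) {init : (Fin R → 𝒳) → ℝ}
    (hinit : ∑ Z, init Z = 1) (K : ℕ) (c : ℝ) : pathExpect κ init K (fun _ => c) = c := by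
  rw [show (fun _ : ℕ → 𝒳 => c) = c • 1 by ext; simp, map_smul, pathExpect_one hκ hinit,
    smul_eq_mul, mul_one]

theorem pathExpect_of_dependsOn (hκ : ∀ Z, κ Z ∈ stdSimplex ℝ 𝒳) (init : (Fin R → 𝒳) → ℝ)
    {k K : ℕ} (hkK : k ≤ K) {g : (ℕ → 𝒳) → ℝ} (hg : DependsOn g (Set.Iio (k + R))) :
    pathExpect κ init K g = pathExpect κ init k g := by
  have hblock : blockExpect κ K g = blockExpect κ k g :=
    funext fun Z => congrFun (condExpect_of_dependsOn hκ hkK (by rwa [zero_add])) _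
  rw [pathExpect_apply, hblock, pathExpect_apply]

theorem pathExpect_sqrt_le (hκ : ∀ Z, κ Z ∈ stdSimplex ℝ 𝒳) {init : (Fin R → 𝒳) → ℝ}
    (hinit : init ∈ stdSimplex ℝ (Fin R → 𝒳)) (K : ℕ) {g : (ℕ → 𝒳) → ℝ} (hg : 0 ≤ g) :
    pathExpect κ init K (fun x => √(g x)) ≤ √(pathExpect κ init K g) := by
  refine Real.le_sqrt_of_sq_le ((sq_map_le_map_sq (fun _ hf => pathExpect_nonneg hκ hinit.1 K hf)
    (pathExpect_one hκ hinit.2 K) _).trans_eq (congrArg _ ?_))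
  ext x
  exact Real.sq_sqrt (hg x)

theorem pathExpect_succ (init : (Fin R → 𝒳) → ℝ) (K : ℕ) (g : (ℕ → 𝒳) → ℝ) :
    pathExpect κ init (K + 1) g = pathExpect κ init K (stepExpect κ K g) := by
  have hblock : blockExpect κ (K + 1) g = blockExpect κ K (stepExpect κ K g) := by
    ext Z
    rw [blockExpect_apply, condExpect_add, zero_add, condExpect_succ, condExpect_zero,
      blockExpect_apply]
  rw [pathExpect_apply, hblock, pathExpect_apply]

theorem pathExpect_le_sqrt_chiSq (hκ : ∀ Z, κ Z ∈ stdSimplex ℝ 𝒳) {μ₀ μ : (Fin R → 𝒳) → ℝ}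
    (hμ : ∀ Z, 0 < μ Z) (hμ₀1 : ∑ Z, μ₀ Z = 1) (hμ1 : ∑ Z, μ Z = 1) (K : ℕ)
    (g : (ℕ → 𝒳) → ℝ) :
    pathExpect κ μ₀ K g ≤ √(chiSq μ₀ μ + 1) * √(pathExpect κ μ K (g ^ 2)) := by
  refine (dotProduct_le_sqrt_chiSq_mul_sqrt hμ hμ₀1 hμ1 _).trans ?_
  gcongr
  exact sum_le_sum fun Z _ => mul_le_mul_of_nonneg_left (sq_blockExpect_le hκ K g Z) (hμ Z).le

variable [DecidableEq 𝒳]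

theorem pathExpect_mul_comp_shift (hκ : ∀ Z, κ Z ∈ stdSimplex ℝ 𝒳) (init : (Fin R → 𝒳) → ℝ)
    {t k j K : ℕ} (hK : t + k + j ≤ K) {g h : (ℕ → 𝒳) → ℝ} (hh : DependsOn h (Set.Iio (t + R)))
    (hg : DependsOn g (Set.Iio (j + R))) :
    pathExpect κ init K (h * g ∘ shift (t + k)) =
      pathExpect κ init K (h * (blockExpect κ j g ᵥ* blockMatrix κ ^ k) ∘ block R t) := by
  have hlater {T : ℕ} (hT : t ≤ T) : DependsOn h (Set.Iio (T + R)) :=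
    hh.mono (Set.Iio_subset_Iio (by omega))
  rw [pathExpect_of_dependsOn hκ init hK (dependsOn_mul (hlater (by omega)) (by
      simpa only [add_assoc] using dependsOn_comp_shift hg (t + k))),
    pathExpect_of_dependsOn hκ init (show t ≤ K by omega)
      (dependsOn_mul hh (dependsOn_comp_block t _))]
  have hcond : condExpect κ 0 (t + k + j) (h * g ∘ shift (t + k)) =
      condExpect κ 0 t (h * (blockExpect κ j g ᵥ* blockMatrix κ ^ k) ∘ block R t) := by
    rw [condExpect_add, condExpect_mul (hlater (by omega)), zero_add,
      condExpect_comp_shift_eq_blockExpect _ hg, condExpect_add, zero_add, condExpect_mul hh,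
      condExpect_comp_block]
  simp only [pathExpect_apply, dotProduct, blockExpect_apply, hcond]

theorem pathExpect_comp_block (hκ : ∀ Z, κ Z ∈ stdSimplex ℝ 𝒳) {μ : (Fin R → 𝒳) → ℝ}
    (hμ : blockMatrix κ *ᵥ μ = μ) {t K : ℕ} (htK : t ≤ K) (φ : (Fin R → 𝒳) → ℝ) :
    pathExpect κ μ K (φ ∘ block R t) = φ ⬝ᵥ μ := by
  have hblock : blockExpect κ t (φ ∘ block R t) = φ ᵥ* blockMatrix κ ^ t := by
    have hcond := condExpect_comp_block (κ := κ) 0 t φ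
    ext Z
    rw [zero_add] at hcond
    rw [blockExpect_apply, hcond, Function.comp_apply, block_zero_extendWord]
  rw [pathExpect_of_dependsOn hκ μ htK (dependsOn_comp_block t φ), pathExpect_apply, hblock,
    dotProduct_comm, vecMul_pow_dotProduct hμ]

end PathExpectation

section ErgodicTheorem

variable {𝒳 W : Type*} [Fintype 𝒳] [Inhabited 𝒳] [DecidableEq W] {R : ℕ}
  {κ : (Fin R → 𝒳) → 𝒳 → ℝ} {μ₀ μ : (Fin R → 𝒳) → ℝ}

/-- The law of the feature `ξ` of the chain started from `μ`. Running the chain for `j` steps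
suffices for features of the first `j + R` tokens. -/
noncomputable def featureLaw (κ : (Fin R → 𝒳) → 𝒳 → ℝ) (μ : (Fin R → 𝒳) → ℝ) (j : ℕ)
    (ξ : (ℕ → 𝒳) → W) (w : W) : ℝ :=
  pathExpect κ μ j fun x => if ξ x = w then 1 else 0

/-- The `w`-coordinate of the centred indicator vector of the feature `ξ`, as an observable. -/
noncomputable def centeredFeature (κ : (Fin R → 𝒳) → 𝒳 → ℝ) (μ : (Fin R → 𝒳) → ℝ) (j : ℕ)
    (ξ : (ℕ → 𝒳) → W) (w : W) : (ℕ → 𝒳) → ℝ :=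
  fun x => centered (featureLaw κ μ j ξ) (ξ x) w

theorem centeredFeature_eq (j : ℕ) (ξ : (ℕ → 𝒳) → W) (w : W) :
    centeredFeature κ μ j ξ w =
      (fun x => if ξ x = w then 1 else 0) - featureLaw κ μ j ξ w • 1 := by
  ext x
  simp [centeredFeature, centered, Pi.single_apply, eq_comm]

theorem dependsOn_centeredFeature {j : ℕ} {ξ : (ℕ → 𝒳) → W} {s : Set ℕ} (hξ : DependsOn ξ s)
    (w : W) : DependsOn (centeredFeature κ μ j ξ w) s :=
  fun _ _ hxy => congrArg (centered _ · w) (hξ hxy)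

theorem pathExpect_centeredFeature (hκ : ∀ Z, κ Z ∈ stdSimplex ℝ 𝒳) (hμ1 : ∑ Z, μ Z = 1) (j : ℕ)
    (ξ : (ℕ → 𝒳) → W) (w : W) : pathExpect κ μ j (centeredFeature κ μ j ξ w) = 0 := by
  rw [centeredFeature_eq, map_sub, map_smul, pathExpect_one hκ hμ1, smul_eq_mul, mul_one,
    featureLaw, sub_self]

theorem pathExpect_sq_centeredFeature (hκ : ∀ Z, κ Z ∈ stdSimplex ℝ 𝒳) (hμ1 : ∑ Z, μ Z = 1)
    (j : ℕ) (ξ : (ℕ → 𝒳) → W) (w : W) :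
    pathExpect κ μ j (centeredFeature κ μ j ξ w ^ 2) =
      featureLaw κ μ j ξ w - featureLaw κ μ j ξ w ^ 2 := by
  have hexpand : centeredFeature κ μ j ξ w ^ 2 =
      (1 - 2 * featureLaw κ μ j ξ w) • (fun x => if ξ x = w then 1 else 0) +
        featureLaw κ μ j ξ w ^ 2 • 1 := by
    ext x
    simp only [centeredFeature_eq, Pi.pow_apply, Pi.sub_apply, Pi.add_apply, Pi.smul_apply,
      Pi.one_apply, smul_eq_mul]
    split_ifs <;> ring
  rw [hexpand, map_add, map_smul, map_smul, pathExpect_one hκ hμ1, ← featureLaw]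
  simp only [smul_eq_mul]
  ring

variable [Fintype W]

theorem featureLaw_mem_stdSimplex (hκ : ∀ Z, κ Z ∈ stdSimplex ℝ 𝒳)
    (hμ : μ ∈ stdSimplex ℝ (Fin R → 𝒳)) (j : ℕ) (ξ : (ℕ → 𝒳) → W) :
    featureLaw κ μ j ξ ∈ stdSimplex ℝ W := by
  refine ⟨fun w => pathExpect_nonneg hκ hμ.1 j fun x => by positivity, ?_⟩
  calc ∑ w, featureLaw κ μ j ξ w
      = pathExpect κ μ j (∑ w, fun x => if ξ x = w then 1 else 0) := (map_sum _ _ _).symm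
    _ = pathExpect κ μ j 1 := congrArg _ (by ext x; simp)
    _ = 1 := pathExpect_one hκ hμ.2 j

variable [DecidableEq 𝒳] {lam : ℝ} {j k K N s s' : ℕ} {ξ : (ℕ → 𝒳) → W}

theorem sum_sq_blockExpect_vecMul_pow_le (hκ : ∀ Z, κ Z ∈ stdSimplex ℝ 𝒳)
    (hμ : μ ∈ stdSimplex ℝ (Fin R → 𝒳)) (hstat : blockMatrix κ *ᵥ μ = μ)
    (hgap : ContractsMeanZero (blockMatrix κ) μ lam) :
    ∑ w, ∑ Z, μ Z *
        (blockExpect κ j (centeredFeature κ μ j ξ w) ᵥ* blockMatrix κ ^ k) Z ^ 2 ≤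
      (lam ^ k) ^ 2 * (1 - featureLaw κ μ j ξ ⬝ᵥ featureLaw κ μ j ξ) := by
  have hcoord (w : W) : ∑ Z, μ Z *
      (blockExpect κ j (centeredFeature κ μ j ξ w) ᵥ* blockMatrix κ ^ k) Z ^ 2 ≤
        (lam ^ k) ^ 2 * (featureLaw κ μ j ξ w - featureLaw κ μ j ξ w ^ 2) := by
    have hmean : blockExpect κ j (centeredFeature κ μ j ξ w) ⬝ᵥ μ = 0 := by
      rw [dotProduct_comm]
      exact pathExpect_centeredFeature hκ hμ.2 j ξ w
    refine (hgap.pow hstat k _ hmean).trans ?_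
    rw [← pathExpect_sq_centeredFeature hκ hμ.2]
    gcongr
    exact sum_le_sum fun Z _ => mul_le_mul_of_nonneg_left (sq_blockExpect_le hκ j _ Z) (hμ.1 Z)
  refine (sum_le_sum fun w _ => hcoord w).trans_eq ?_
  rw [← mul_sum, sum_sub_distrib, (featureLaw_mem_stdSimplex hκ hμ j ξ).2]
  simp only [dotProduct, sq]

/-- The conditional expectation of `⟨Y_s, Y_{s+j+k}⟩` given the block at time `s + j`, where `Y_s`
is the centred indicator vector of the feature `ξ` at time `s`. -/
noncomputable def lagProduct (κ : (Fin R → 𝒳) → 𝒳 → ℝ) (μ : (Fin R → 𝒳) → ℝ) (j : ℕ)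
    (ξ : (ℕ → 𝒳) → W) (s k : ℕ) : (ℕ → 𝒳) → ℝ :=
  ∑ w, centeredFeature κ μ j ξ w ∘ shift s *
    (blockExpect κ j (centeredFeature κ μ j ξ w) ᵥ* blockMatrix κ ^ k) ∘ block R (s + j)

theorem pathExpect_lagProduct (hκ : ∀ Z, κ Z ∈ stdSimplex ℝ 𝒳)
    (hξ : DependsOn ξ (Set.Iio (j + R))) (hK : s + j + k + j ≤ K) :
    pathExpect κ μ₀ K (fun x => centered (featureLaw κ μ j ξ) (ξ (shift s x)) ⬝ᵥ
        centered (featureLaw κ μ j ξ) (ξ (shift (s + j + k) x))) =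
      pathExpect κ μ₀ K (lagProduct κ μ j ξ s k) := by
  have hdot : (fun x => centered (featureLaw κ μ j ξ) (ξ (shift s x)) ⬝ᵥ
        centered (featureLaw κ μ j ξ) (ξ (shift (s + j + k) x))) =
      ∑ w, centeredFeature κ μ j ξ w ∘ shift s *
        centeredFeature κ μ j ξ w ∘ shift (s + j + k) := by
    ext x
    rw [Finset.sum_apply]
    rfl
  rw [hdot, lagProduct, map_sum, map_sum]
  refine sum_congr rfl fun w _ => pathExpect_mul_comp_shift hκ μ₀ hK ?_
    (dependsOn_centeredFeature hξ w)
  rw [add_assoc]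
  exact dependsOn_comp_shift (dependsOn_centeredFeature hξ w) s

theorem pathExpect_sq_lagProduct_le (hκ : ∀ Z, κ Z ∈ stdSimplex ℝ 𝒳)
    (hμ : μ ∈ stdSimplex ℝ (Fin R → 𝒳)) (hstat : blockMatrix κ *ᵥ μ = μ)
    (hgap : ContractsMeanZero (blockMatrix κ) μ lam) (hK : s + j ≤ K) :
    pathExpect κ μ K (lagProduct κ μ j ξ s k ^ 2) ≤ (lam ^ k) ^ 2 := by
  set ν := featureLaw κ μ j ξ
  set ψ : W → (Fin R → 𝒳) → ℝ :=
    fun w => blockExpect κ j (centeredFeature κ μ j ξ w) ᵥ* blockMatrix κ ^ k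
  set V : (Fin R → 𝒳) → ℝ := fun Z => ∑ w, ψ w Z ^ 2
  have hν := featureLaw_mem_stdSimplex hκ hμ j ξ
  have hcauchy : lagProduct κ μ j ξ s k ^ 2 ≤ (1 + ν ⬝ᵥ ν) • V ∘ block R (s + j) := by
    intro x
    calc (lagProduct κ μ j ξ s k ^ 2) x
        = (∑ w, centered ν (ξ (shift s x)) w * ψ w (block R (s + j) x)) ^ 2 := by
          rw [Pi.pow_apply, lagProduct, Finset.sum_apply]
          rfl
      _ ≤ (∑ w, centered ν (ξ (shift s x)) w ^ 2) * V (block R (s + j) x) :=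
          sum_mul_sq_le_sq_mul_sq _ _ _
      _ ≤ (1 + ν ⬝ᵥ ν) * V (block R (s + j) x) := by
          refine mul_le_mul_of_nonneg_right ?_ (sum_nonneg fun w _ => sq_nonneg _)
          simpa only [dotProduct, sq] using centered_dotProduct_self_le hν.1 (ξ (shift s x))
  have hV : V ⬝ᵥ μ ≤ (lam ^ k) ^ 2 * (1 - ν ⬝ᵥ ν) := by
    refine le_of_eq_of_le ?_ (sum_sq_blockExpect_vecMul_pow_le hκ hμ hstat hgap)
    rw [sum_comm]
    simp only [dotProduct, V, ψ, ← mul_sum, mul_comm]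
  have hνν : 0 ≤ ν ⬝ᵥ ν := dotProduct_nonneg_of_nonneg hν.1 hν.1
  calc pathExpect κ μ K (lagProduct κ μ j ξ s k ^ 2)
      ≤ (1 + ν ⬝ᵥ ν) * (V ⬝ᵥ μ) := by
        refine (pathExpect_mono hκ hμ.1 K hcauchy).trans_eq ?_
        rw [map_smul, pathExpect_comp_block hκ hstat hK, smul_eq_mul]
    _ ≤ (1 + ν ⬝ᵥ ν) * ((lam ^ k) ^ 2 * (1 - ν ⬝ᵥ ν)) := by gcongr
    _ = (lam ^ k) ^ 2 * (1 - (ν ⬝ᵥ ν) ^ 2) := by ring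
    _ ≤ (lam ^ k) ^ 2 := mul_le_of_le_one_right (sq_nonneg _) (by linarith [sq_nonneg (ν ⬝ᵥ ν)])

theorem pathExpect_centered_dotProduct_le_of_le (hκ : ∀ Z, κ Z ∈ stdSimplex ℝ 𝒳)
    (hμ₀ : μ₀ ∈ stdSimplex ℝ (Fin R → 𝒳)) (hμpos : ∀ Z, 0 < μ Z) (hμ1 : ∑ Z, μ Z = 1)
    (hstat : blockMatrix κ *ᵥ μ = μ) (hlam : 0 ≤ lam)
    (hgap : ContractsMeanZero (blockMatrix κ) μ lam) (hξ : DependsOn ξ (Set.Iio (j + R)))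
    (hs : s ≤ s') (hs' : s' + j ≤ K) :
    pathExpect κ μ₀ K (fun x => centered (featureLaw κ μ j ξ) (ξ (shift s x)) ⬝ᵥ
        centered (featureLaw κ μ j ξ) (ξ (shift s' x))) ≤
      if s' - s < j then 2 else √(chiSq μ₀ μ + 1) * lam ^ (s' - s - j) := by
  have hμ : μ ∈ stdSimplex ℝ (Fin R → 𝒳) := ⟨fun Z => (hμpos Z).le, hμ1⟩
  split_ifs with hnear
  · refine (pathExpect_mono hκ hμ₀.1 K fun x => ?_).trans_eq (pathExpect_const hκ hμ₀.2 K 2)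
    exact centered_dotProduct_centered_le_two (featureLaw_mem_stdSimplex hκ hμ j ξ) _ _
  · obtain ⟨k, rfl⟩ : ∃ k, s' = s + j + k := Nat.exists_eq_add_of_le (by omega)
    rw [pathExpect_lagProduct hκ hξ hs', show s + j + k - s - j = k by omega]
    refine (pathExpect_le_sqrt_chiSq hκ hμpos hμ₀.2 hμ1 K _).trans ?_
    gcongr
    exact Real.sqrt_le_iff.mpr ⟨pow_nonneg hlam k,
      pathExpect_sq_lagProduct_le hκ hμ hstat hgap (by omega)⟩

theorem pathExpect_centered_dotProduct_le (hκ : ∀ Z, κ Z ∈ stdSimplex ℝ 𝒳)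
    (hμ₀ : μ₀ ∈ stdSimplex ℝ (Fin R → 𝒳)) (hμpos : ∀ Z, 0 < μ Z) (hμ1 : ∑ Z, μ Z = 1)
    (hstat : blockMatrix κ *ᵥ μ = μ) (hlam : 0 ≤ lam)
    (hgap : ContractsMeanZero (blockMatrix κ) μ lam) (hξ : DependsOn ξ (Set.Iio (j + R)))
    (hs : s + j ≤ K) (hs' : s' + j ≤ K) :
    pathExpect κ μ₀ K (fun x => centered (featureLaw κ μ j ξ) (ξ (shift s x)) ⬝ᵥ
        centered (featureLaw κ μ j ξ) (ξ (shift s' x))) ≤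
      if Nat.dist s s' < j then 2 else √(chiSq μ₀ μ + 1) * lam ^ (Nat.dist s s' - j) := by
  wlog hle : s ≤ s' generalizing s s'
  · simpa only [dotProduct_comm, Nat.dist_comm] using this hs' hs (le_of_not_ge hle)
  rw [Nat.dist_eq_sub_of_le hle]
  exact pathExpect_centered_dotProduct_le_of_le hκ hμ₀ hμpos hμ1 hstat hlam hgap hξ hle hs'

theorem pathExpect_sum_sq_empirical_sub_le (hκ : ∀ Z, κ Z ∈ stdSimplex ℝ 𝒳)
    (hμ₀ : μ₀ ∈ stdSimplex ℝ (Fin R → 𝒳)) (hμpos : ∀ Z, 0 < μ Z) (hμ1 : ∑ Z, μ Z = 1)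
    (hstat : blockMatrix κ *ᵥ μ = μ) (hlam0 : 0 ≤ lam) (hlam1 : lam < 1)
    (hgap : ContractsMeanZero (blockMatrix κ) μ lam) (hξ : DependsOn ξ (Set.Iio (j + R)))
    (hN : 0 < N) (hNK : N + j ≤ K + 1) :
    pathExpect κ μ₀ K (fun x =>
        ∑ w, (empirical (range N) (fun s => ξ (shift s x)) w - featureLaw κ μ j ξ w) ^ 2) ≤
      2 * (2 * j + (1 - lam)⁻¹ * √(chiSq μ₀ μ + 1)) / N := by
  set cov : ℕ → ℕ → (ℕ → 𝒳) → ℝ := fun s s' x =>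
    centered (featureLaw κ μ j ξ) (ξ (shift s x)) ⬝ᵥ
      centered (featureLaw κ μ j ξ) (ξ (shift s' x))
  set bound : ℕ → ℝ := fun i => if i < j then 2 else √(chiSq μ₀ μ + 1) * lam ^ (i - j)
  have hexpand : (fun x =>
      ∑ w, (empirical (range N) (fun s => ξ (shift s x)) w - featureLaw κ μ j ξ w) ^ 2) =
        ((N : ℝ)⁻¹ ^ 2) • ∑ s ∈ range N, ∑ s' ∈ range N, cov s s' := by
    ext x
    simp only [sum_sq_empirical_sub (nonempty_range_iff.mpr hN.ne'), card_range, Pi.smul_apply,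
      Finset.sum_apply, smul_eq_mul, cov]
  have hrow {s : ℕ} (hs : s ∈ range N) : ∑ s' ∈ range N, pathExpect κ μ₀ K (cov s s') ≤
      2 * (2 * j + (1 - lam)⁻¹ * √(chiSq μ₀ μ + 1)) := by
    have hmem {i : ℕ} (hi : i ∈ range N) : i + j ≤ K := by have := mem_range.mp hi; omega
    calc ∑ s' ∈ range N, pathExpect κ μ₀ K (cov s s')
        ≤ ∑ s' ∈ range N, bound (Nat.dist s s') := sum_le_sum fun s' hs' =>
          pathExpect_centered_dotProduct_le hκ hμ₀ hμpos hμ1 hstat hlam0 hgap hξ (hmem hs)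
            (hmem hs')
      _ ≤ 2 * ∑ i ∈ range N, bound i :=
          sum_range_natDist_le (fun i => by positivity) (mem_range.mp hs)
      _ ≤ _ := by
          gcongr
          exact sum_range_truncated_geometric_le hlam0 hlam1 zero_le_two (Real.sqrt_nonneg _) N j
  rw [hexpand, map_smul, map_sum, smul_eq_mul]
  simp only [map_sum]
  refine (mul_le_mul_of_nonneg_left (sum_le_card_nsmul _ _ _ fun s hs => hrow hs)
    (by positivity)).trans_eq ?_
  rw [card_range, nsmul_eq_mul]
  field

theorem pathExpect_sum_abs_tilt_sub_tilt_empirical_le (hκ : ∀ Z, κ Z ∈ stdSimplex ℝ 𝒳)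
    (hμ₀ : μ₀ ∈ stdSimplex ℝ (Fin R → 𝒳)) (hμpos : ∀ Z, 0 < μ Z) (hμ1 : ∑ Z, μ Z = 1)
    (hstat : blockMatrix κ *ᵥ μ = μ) (hlam0 : 0 ≤ lam) (hlam1 : lam < 1)
    (hgap : ContractsMeanZero (blockMatrix κ) μ lam) (hξ : DependsOn ξ (Set.Iio (j + R)))
    (hN : 0 < N) (hNK : N + j ≤ K + 1) {m : ℝ} (hm : 0 < m)
    (hmle : ∀ w, m ≤ featureLaw κ μ j ξ w) {e : (ℕ → 𝒳) → W → ℝ} (he : ∀ x w, 0 < e x w) :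
    pathExpect κ μ₀ K (fun x => ∑ w, |tilt (featureLaw κ μ j ξ) (e x) w -
        tilt (empirical (range N) fun s => ξ (shift s x)) (e x) w|) ≤
      2 / m * √(2 * (2 * j + (1 - lam)⁻¹ * √(chiSq μ₀ μ + 1)) / N) := by
  set sqErr : (ℕ → 𝒳) → ℝ := fun x =>
    ∑ w, (empirical (range N) (fun s => ξ (shift s x)) w - featureLaw κ μ j ξ w) ^ 2
  calc _ ≤ pathExpect κ μ₀ K ((2 / m) • fun x => √(sqErr x)) :=
        pathExpect_mono hκ hμ₀.1 K fun x => sum_abs_tilt_sub_tilt_le_sqrt hm hmle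
          (empirical_mem_stdSimplex (nonempty_range_iff.mpr hN.ne') _) (he x)
    _ = 2 / m * pathExpect κ μ₀ K (fun x => √(sqErr x)) := by rw [map_smul, smul_eq_mul]
    _ ≤ 2 / m * √(pathExpect κ μ₀ K sqErr) := by
        gcongr
        exact pathExpect_sqrt_le hκ hμ₀ K fun x => sum_nonneg fun w _ => sq_nonneg _
    _ ≤ _ := by
        gcongr
        exact pathExpect_sum_sq_empirical_sub_le hκ hμ₀ hμpos hμ1 hstat hlam0 hlam1 hgap hξ hN hNK

end ErgodicTheorem

section NGram

variable {d n R : ℕ} {r : Fin n → ℕ} {pk : (Fin n → Fin d) → Fin d → ℝ}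

/-- The `n`-gram chain as an order-`R` chain: the next token is drawn from `pk` given the tokens
at the offsets `r k` before it. -/
def ngramKernel (hR : 0 < R) (r : Fin n → ℕ) (hrpos : ∀ k, 0 < r k)
    (pk : (Fin n → Fin d) → Fin d → ℝ) (Z : Fin R → Fin d) : Fin d → ℝ :=
  pk fun k => Z ⟨R - r k, Nat.sub_lt hR (hrpos k)⟩

theorem eq_push_iff {𝒳 : Type*} (hR : 0 < R) {Z' Z : Fin R → 𝒳} {e : 𝒳} :
    Z' = push Z e ↔ Z' ⟨R - 1, Nat.sub_lt hR Nat.one_pos⟩ = e ∧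
      ∀ i : Fin (R - 1), Z' ⟨i.1, lt_of_lt_of_le i.2 (Nat.sub_le R 1)⟩ =
        Z ⟨i.1 + 1, by have := i.2; omega⟩ := by
  constructor
  · rintro rfl
    exact ⟨dif_neg (by simp only; omega), fun i => dif_pos (by have := i.2; simp only; omega)⟩
  · rintro ⟨rfl, hinit⟩
    ext i
    rw [push]
    split_ifs with hi
    · exact hinit ⟨i.1, by omega⟩
    · congr 1
      ext
      have := i.2
      simp only
      omega

theorem windowMatrix_eq_blockMatrix (hR : 0 < R) (hrpos : ∀ k, 0 < r k) :
    windowMatrix d n R hR r hrpos pk = blockMatrix (ngramKernel hR r hrpos pk) := by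
  ext Z' Z
  simp only [windowMatrix, blockMatrix, Matrix.of_apply, eq_push_iff hR, ngramKernel]
  split_ifs with h <;> simp [h]

variable [NeZero d]

theorem ngramProb_eq_mul_prod {T : ℕ} (init : (Fin R → Fin d) → ℝ) (hRT : R ≤ T)
    (x : Fin T → Fin d) :
    ngramProb d n R T r pk init hRT x = init (block R 0 (extendWord x)) *
      ∏ l ∈ Ico R T, pk (fun k => extendWord x (l - r k)) (extendWord x l) := by
  have hval {l : ℕ} (hl : l < T) : x ⟨l, hl⟩ = extendWord x l := (extendWord_val x ⟨l, hl⟩).symm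
  have hblock : block R 0 (extendWord x) = fun i : Fin R => extendWord x i :=
    funext fun i => congrArg _ (zero_add _)
  rw [ngramProb, ← prod_attach (Ico R T), hblock]
  simp only [hval]

theorem ngramProb_snoc (hR : 0 < R) (hrpos : ∀ k, 0 < r k) (hrR : ∀ k, r k ≤ R) {K : ℕ}
    (init : (Fin R → Fin d) → ℝ) (x : Fin (R + K) → Fin d) (e : Fin d) :
    ngramProb d n R (R + K + 1) r pk init (by omega) (Fin.snoc x e) =
      ngramProb d n R (R + K) r pk init (by omega) x *
        ngramKernel hR r hrpos pk (block R K (extendWord x)) e := by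
  have hold {i : ℕ} (hi : i < R + K) :
      Function.update (extendWord x) (R + K) e i = extendWord x i :=
    Function.update_of_ne hi.ne _ _
  have hinit : block R 0 (Function.update (extendWord x) (R + K) e) = block R 0 (extendWord x) :=
    funext fun i => hold (by have := i.2; omega)
  have hprod : ∏ l ∈ Ico R (R + K),
      pk (fun k => Function.update (extendWord x) (R + K) e (l - r k))
        (Function.update (extendWord x) (R + K) e l) =
      ∏ l ∈ Ico R (R + K), pk (fun k => extendWord x (l - r k)) (extendWord x l) := by
    refine prod_congr rfl fun l hl => ?_
    have hlt := (mem_Ico.mp hl).2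
    simp only [hold hlt, hold ((Nat.sub_le _ _).trans_lt hlt)]
  have hlast : (fun k => Function.update (extendWord x) (R + K) e (R + K - r k)) =
      fun k => block R K (extendWord x) ⟨R - r k, Nat.sub_lt hR (hrpos k)⟩ := by
    ext1 k
    have := hrpos k
    have := hrR k
    rw [hold (by omega), block, show R + K - r k = K + (R - r k) by omega]
  rw [ngramProb_eq_mul_prod, ngramProb_eq_mul_prod, extendWord_snoc,
    prod_Ico_succ_top (Nat.le_add_right R K), hinit, hprod, hlast, Function.update_self, mul_assoc,
    ngramKernel]

theorem sum_ngramProb_mul (hR : 0 < R) (hrpos : ∀ k, 0 < r k) (hrR : ∀ k, r k ≤ R) {K T : ℕ}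
    (hT : T = R + K) (hRT : R ≤ T) (init : (Fin R → Fin d) → ℝ) (g : (ℕ → Fin d) → ℝ) :
    ∑ x, ngramProb d n R T r pk init hRT x * g (extendWord x) =
      pathExpect (ngramKernel hR r hrpos pk) init K g := by
  subst hT
  induction K generalizing g with
  | zero =>
    refine sum_congr rfl fun Z _ => ?_
    rw [ngramProb_eq_mul_prod, show Ico R (R + 0) = ∅ from Ico_self R, prod_empty, mul_one]
    exact congrArg (init · * _) (block_zero_extendWord Z)
  | succ K ih =>
    rw [pathExpect_succ, ← ih _ (Nat.le_add_right R K)]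
    refine ((Fin.snocEquiv fun _ : Fin (R + K + 1) => Fin d).sum_comp _).symm.trans ?_
    rw [Fintype.sum_prod_type_right]
    refine sum_congr rfl fun x _ => ?_
    rw [stepExpect_apply, mul_sum]
    refine sum_congr rfl fun e _ => ?_
    rw [add_comm K R, ← mul_assoc]
    exact congrArg₂ (· * ·) (ngramProb_snoc hR hrpos hrR init x e)
      (congrArg g (extendWord_snoc x e))

end NGram

section TokenWindow

variable {𝒳 : Type*} {S : Finset ℕ}

/-- The token of `x` at position `l` together with the tokens at the offsets `S` before it: the
counterpart of `window` for infinite sequences. -/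
def tokenWindow (S : Finset ℕ) (l : ℕ) (x : ℕ → 𝒳) : 𝒳 × ({s // s ∈ S} → 𝒳) :=
  (x l, fun s => x (l - s))

theorem dependsOn_tokenWindow (S : Finset ℕ) (l : ℕ) :
    DependsOn (tokenWindow (𝒳 := 𝒳) S l) (Set.Iio (l + 1)) :=
  fun _ _ hxy => Prod.ext (hxy _ l.lt_succ_self)
    (funext fun _ => hxy _ (Nat.lt_succ_of_le (Nat.sub_le _ _)))

theorem tokenWindow_shift {M : ℕ} (hS : ∀ s ∈ S, s ≤ M) (i : ℕ) (x : ℕ → 𝒳) :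
    tokenWindow S M (shift i x) = tokenWindow S (M + i) x := by
  refine Prod.ext (congrArg x (add_comm i M)) (funext fun s => congrArg x ?_)
  have := hS s s.2
  omega

variable {d : ℕ}

theorem windowLaw_dotProduct {T l : ℕ} (q : (Fin T → Fin d) → ℝ) (hl : l < T)
    (e : Fin d × ({s // s ∈ S} → Fin d) → ℝ) :
    windowLaw d T S q l hl ⬝ᵥ e = ∑ x, q x * e (window d T S x l hl) := by
  simp only [dotProduct, windowLaw, sum_mul]
  rw [sum_comm]
  simp [ite_mul]

variable [NeZero d]

theorem window_eq_tokenWindow {T l : ℕ} (x : Fin T → Fin d) (hl : l < T) :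
    window d T S x l hl = tokenWindow S l (extendWord x) :=
  Prod.ext (extendWord_val x ⟨l, hl⟩).symm (funext fun _ => (extendWord_val x _).symm)

theorem sum_attach_Ico_window {M L : ℕ} (hS : ∀ s ∈ S, s ≤ M) (x : Fin (L + 1) → Fin d)
    (f : Fin d × ({s // s ∈ S} → Fin d) → ℝ) :
    ∑ l ∈ (Ico M L).attach, f (window d (L + 1) S x l.1 (icoLtSucc l)) =
      ∑ i ∈ range (L - M), f (tokenWindow S M (shift i (extendWord x))) := by
  simp only [window_eq_tokenWindow, tokenWindow_shift hS]
  rw [sum_attach _ fun l => f (tokenWindow S l (extendWord x)), sum_Ico_eq_sum_range]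

theorem windowLaw_eq_featureLaw {n R j M : ℕ} {r : Fin n → ℕ}
    {pk : (Fin n → Fin d) → Fin d → ℝ} (hR : 0 < R) (hrpos : ∀ k, 0 < r k) (hrR : ∀ k, r k ≤ R)
    (hM : M + 1 = R + j) (hRM : R ≤ M + 1) (μ : (Fin R → Fin d) → ℝ) :
    windowLaw d (M + 1) S (ngramProb d n R (M + 1) r pk μ hRM) M M.lt_succ_self =
      featureLaw (ngramKernel hR r hrpos pk) μ j (tokenWindow S M) := by
  ext w
  rw [featureLaw, ← sum_ngramProb_mul hR hrpos hrR hM hRM]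
  simp only [windowLaw, window_eq_tokenWindow, mul_ite, mul_one, mul_zero]

end TokenWindow

theorem two_div_mul_sqrt_le {B m : ℝ} {j L M N : ℕ} (hB : 0 ≤ B) (hm : 0 < m) (hN : 0 < N)
    (hjM : j ≤ M) (hLN : L ≤ 2 * N) (hL : 0 < L) :
    2 / m * √(2 * (2 * j + B) / N) ≤ 4 * √(B + 4 * M) / (√L * m) := by
  have hLpos : (0 : ℝ) < L := by exact_mod_cast hL
  have hbound : 2 * (2 * j + B) / N ≤ 2 ^ 2 * (B + 4 * M) / L := by
    have hjM' : (j : ℝ) ≤ M := by exact_mod_cast hjM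
    have hLN' : (L : ℝ) ≤ 2 * N := by exact_mod_cast hLN
    rw [div_le_div_iff₀ (by exact_mod_cast hN) hLpos]
    calc 2 * (2 * j + B) * L ≤ 2 * (4 * M + B) * (2 * N) := by gcongr; norm_num
      _ = 2 ^ 2 * (B + 4 * M) * N := by ring
  calc 2 / m * √(2 * (2 * j + B) / N) ≤ 2 / m * √(2 ^ 2 * (B + 4 * M) / L) := by gcongr
    _ = 4 * √(B + 4 * M) / (√L * m) := by
        rw [Real.sqrt_div' _ hLpos.le, Real.sqrt_mul (by norm_num), Real.sqrt_sq zero_le_two]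
        field_simp
        norm_num

theorem statement8_general
    (d n R M L : ℕ) (hd : 0 < d) (hR : 0 < R)
    (r : Fin n → ℕ) (hrpos : ∀ i, 0 < r i) (hrR : ∀ i, r i ≤ R)
    (pk : (Fin n → Fin d) → Fin d → ℝ)
    (hpk0 : ∀ Y e, 0 ≤ pk Y e) (hpk1 : ∀ Y, ∑ e, pk Y e = 1)
    (μ0 : (Fin R → Fin d) → ℝ) (hμ00 : ∀ Z, 0 ≤ μ0 Z) (hμ01 : ∑ Z, μ0 Z = 1)
    (μ : (Fin R → Fin d) → ℝ) (hμpos : ∀ Z, 0 < μ Z) (hμ1 : ∑ Z, μ Z = 1)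
    (hstat : ∀ Z', μ Z' = ∑ Z, windowMatrix d n R hR r hrpos pk Z' Z * μ Z)
    (lam : ℝ) (hlam0 : 0 ≤ lam) (hlam1 : lam < 1)
    (hop : ∀ v : (Fin R → Fin d) → ℝ,
      √(∑ Z', (specA d n R hR r hrpos pk μ *ᵥ v) Z' ^ 2) ≤ lam * √(∑ Z, v Z ^ 2))
    (hRM : R ≤ M) (hML : 2 * M ≤ L)
    (Sst : Finset ℕ) (hSst : ∀ s ∈ Sst, s ≤ M)
    (m : ℝ) (hm0 : 0 < m)
    (hmle : ∀ w, m ≤ windowLaw d (M + 1) Sst (ngramProb d n R (M + 1) r pk μ (by omega)) M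
        M.lt_succ_self w)
    (g : (Fin (L + 1) → Fin d) → Fin d × ({s // s ∈ Sst} → Fin d) → ℝ)
    (hg : ∀ x w, 0 < g x w) :
    ∑ x : Fin (L + 1) → Fin d,
        ngramProb d n R (L + 1) r pk μ0 (by omega) x *
          ∑ w : Fin d × ({s // s ∈ Sst} → Fin d),
            |windowLaw d (M + 1) Sst (ngramProb d n R (M + 1) r pk μ (by omega)) M
                  M.lt_succ_self w * g x w /
                ∑ y, ngramProb d n R (M + 1) r pk μ (by omega) y *
                  g x (window d (M + 1) Sst y M M.lt_succ_self) -
              ∑ l ∈ (Ico M L).attach,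
                (g x (window d (L + 1) Sst x l.1 (icoLtSucc l)) /
                    ∑ l' ∈ (Ico M L).attach, g x (window d (L + 1) Sst x l'.1 (icoLtSucc l'))) *
                  (if window d (L + 1) Sst x l.1 (icoLtSucc l) = w then 1 else 0)|
      ≤ 4 * √((1 - lam)⁻¹ * √(chiSq μ0 μ + 1) + 4 * M) / (√L * m) := by
  have : NeZero d := ⟨hd.ne'⟩
  obtain ⟨j, hj⟩ : ∃ j, M + 1 = R + j := Nat.exists_eq_add_of_le (by omega)
  obtain ⟨K, hK⟩ : ∃ K, L + 1 = R + K := Nat.exists_eq_add_of_le (by omega)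
  have hκ (Z : Fin R → Fin d) : ngramKernel hR r hrpos pk Z ∈ stdSimplex ℝ (Fin d) :=
    ⟨hpk0 _, hpk1 _⟩
  have hP := windowMatrix_eq_blockMatrix (pk := pk) hR hrpos
  have hfix : blockMatrix (ngramKernel hR r hrpos pk) *ᵥ μ = μ :=
    hP ▸ (funext hstat).symm
  have hgap : ContractsMeanZero (blockMatrix (ngramKernel hR r hrpos pk)) μ lam :=
    hP ▸ contractsMeanZero_of_opNorm_le hμpos hlam0 hop
  have hN : range (L - M) |>.Nonempty := nonempty_range_iff.mpr (by omega)
  have hξ : DependsOn (tokenWindow (𝒳 := Fin d) Sst M) (Set.Iio (j + R)) := by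
    rw [add_comm j, ← hj]
    exact dependsOn_tokenWindow Sst M
  have hB : 0 ≤ (1 - lam)⁻¹ * √(chiSq μ0 μ + 1) :=
    mul_nonneg (inv_nonneg.mpr (sub_nonneg.mpr hlam1.le)) (Real.sqrt_nonneg _)
  have hν := windowLaw_eq_featureLaw (S := Sst) (pk := pk) hR hrpos hrR hj (by omega) μ
  refine le_trans (le_of_eq ?_) ((pathExpect_sum_abs_tilt_sub_tilt_empirical_le hκ ⟨hμ00, hμ01⟩
    hμpos hμ1 hfix hlam0 hlam1 hgap hξ (N := L - M) (K := K) (by omega) (by omega) hm0 (hν ▸ hmle)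
    (e := fun x => g (block (L + 1) 0 x)) fun x w => hg _ w).trans
    (two_div_mul_sqrt_le hB hm0 (by omega) (by omega) (by omega) (by omega)))
  rw [← sum_ngramProb_mul hR hrpos hrR hK (by omega)]
  refine sum_congr rfl fun x _ => congrArg _ (sum_congr rfl fun w _ => ?_)
  rw [block_zero_extendWord, ← hν, tilt_empirical hN, tilt, windowLaw_dotProduct,
    ← sum_attach_Ico_window hSst,
    sum_attach_Ico_window hSst x fun v => g x v / _ * if v = w then 1 else 0]

/-- The attention-weighted empirical distribution `ν̂_X` of the pairs
`(x_l, X_{l-S*})` is close in expected ℓ₁ distance to the reweighted stationary distribution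
`μ̃_X`: the expected ℓ₁ distance is at most `4((1−λ)⁻¹√(D₀+1) + 4M)^{1/2}/(√L · m)`. -/
theorem statement8
    (d n R M L : ℕ) (hd : 0 < d) (hn : 0 < n) (hR : 0 < R)
    (r : Fin n → ℕ) (hrpos : ∀ i, 0 < r i) (hrmono : StrictMono r)
    (hrR : ∀ i, r i ≤ R) (hRmax : ∃ i, r i = R)
    (pk : (Fin n → Fin d) → Fin d → ℝ)
    (hpk0 : ∀ Y e, 0 ≤ pk Y e) (hpk1 : ∀ Y, ∑ e, pk Y e = 1)
    (μ0 : (Fin R → Fin d) → ℝ) (hμ00 : ∀ Z, 0 ≤ μ0 Z) (hμ01 : ∑ Z, μ0 Z = 1)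
    (μ : (Fin R → Fin d) → ℝ) (hμpos : ∀ Z, 0 < μ Z) (hμ1 : ∑ Z, μ Z = 1)
    (hstat : ∀ Z', μ Z' = ∑ Z, windowMatrix d n R hR r hrpos pk Z' Z * μ Z)
    (lam : ℝ) (hlam0 : 0 ≤ lam) (hlam1 : lam < 1)
    (hop : ∀ v : (Fin R → Fin d) → ℝ,
      Real.sqrt (∑ Z', Matrix.mulVec (specA d n R hR r hrpos pk μ) v Z' ^ 2)
        ≤ lam * Real.sqrt (∑ Z, v Z ^ 2))
    (hRM : R ≤ M) (hML : 2 * M ≤ L)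
    (Sst : Finset ℕ) (hSst : ∀ s ∈ Sst, 1 ≤ s ∧ s ≤ M)
    (a : ℝ) (ha : 0 ≤ a)
    (m : ℝ) (hm0 : 0 < m)
    (hmle : ∀ w, m ≤ windowLaw d (M + 1) Sst (ngramProb d n R (M + 1) r pk μ (by omega)) M
        (Nat.lt_succ_self M) w)
    (hmmem : ∃ w, windowLaw d (M + 1) Sst (ngramProb d n R (M + 1) r pk μ (by omega)) M
        (Nat.lt_succ_self M) w = m) :
    ∑ x : Fin (L + 1) → Fin d,
        ngramProb d n R (L + 1) r pk μ0 (by omega) x *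
          ∑ w : Fin d × ({s // s ∈ Sst} → Fin d),
            |reweighted d M Sst a (ngramProb d n R (M + 1) r pk μ (by omega))
                (parents d (L + 1) Sst x L (Nat.lt_succ_self L)) w -
              ∑ l ∈ (Finset.Ico M L).attach,
                (Real.exp (a * (if parents d (L + 1) Sst x l.1 (icoLtSucc l) =
                      parents d (L + 1) Sst x L (Nat.lt_succ_self L) then 1 else 0)) /
                    ∑ l' ∈ (Finset.Ico M L).attach,
                      Real.exp (a * (if parents d (L + 1) Sst x l'.1 (icoLtSucc l') =
                          parents d (L + 1) Sst x L (Nat.lt_succ_self L) then 1 else 0))) *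
                  (if window d (L + 1) Sst x l.1 (icoLtSucc l) = w then 1 else 0)|
      ≤ 4 * Real.sqrt ((1 - lam)⁻¹ * Real.sqrt (chiSq μ0 μ + 1) + 4 * M) /
          (Real.sqrt L * m) :=
  statement8_general d n R M L hd hR r hrpos hrR pk hpk0 hpk1 μ0 hμ00 hμ01 μ hμpos hμ1 hstat lam
    hlam0 hlam1 hop hRM hML Sst (fun s hs => (hSst s hs).2) m hm0 hmle
    (fun x w => Real.exp
      (a * (if w.2 = parents d (L + 1) Sst x L (Nat.lt_succ_self L) then 1 else 0)))
    fun _ _ => Real.exp_pos _
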